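/- arXiv:2409.04379 — 8 statements merged into one kernel-verified Lean document; each statement's English description precedes it below -/
import Mathlib

section
/- Let M₁, M₂, M₃ be matrices in SL(2,ℂ). Set a = tr M₁, b = tr M₂, c = tr M₃, d = tr(M₁M₂M₃), and X = tr(M₁M₂), Y = tr(M₂M₃), Z = tr(M₁M₃). Then X² + Y² + Z² + XYZ − AX − BY − CZ − D = 0, where A = ab+cd, B = bc+ad, C = ac+bd, D = 4−a²−b²−c²−d²−abcd. -/
open Matrix

/-!
A `2 × 2` matrix over a commutative ring satisfies `adj M = tr M - M`, and `adj` reverses products.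
Expanding `adj (N P) = adj P * adj N` gives the sum of `tr (M N P)` and `tr (M P N)`. Their product
comes from `tr U * tr V = tr (U V) + tr (U * adj V)` with `U = M N P` and `V = M P N`: the outer
factors of `U * adj V` cancel to `det M`, leaving a commutator trace, and `U V` is reduced by the
sandwich formula `P M P = tr (M P) P - det P * adj M`. The Fricke relation says that `tr (M N P)` is
a root of the monic quadratic polynomial with this sum and product of roots.
-/

section AnySize

variable {R n : Type*} [CommRing R] [Fintype n] [DecidableEq n] (M N P : Matrix n n R)

theorem trace_mul_mul_adjugate_cancel : trace (M * N * adjugate M) = det M * trace N := by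
  rw [trace_mul_cycle, adjugate_mul, smul_mul_assoc, one_mul, trace_smul, smul_eq_mul]

theorem trace_mul_mul_mul_adjugate_mul_mul_swap :
    trace (M * N * P * adjugate (M * P * N)) =
      det M * trace (N * P * adjugate N * adjugate P) := by
  calc trace (M * N * P * adjugate (M * P * N))
      = trace (M * (N * P * adjugate N * adjugate P) * adjugate M) := by
        simp only [adjugate_mul_distrib, mul_assoc]
    _ = _ := trace_mul_mul_adjugate_cancel _ _

end AnySize

section TwoByTwo

variable {R : Type*} [CommRing R] (M N P : Matrix (Fin 2) (Fin 2) R)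

theorem adjugate_fin_two_eq_trace_smul_one_sub : adjugate M = trace M • 1 - M := by
  rw [adjugate_fin_two, trace_fin_two]
  ext i j
  fin_cases i <;> fin_cases j <;> simp

theorem trace_adjugate_fin_two : trace (adjugate M) = trace M := by
  rw [adjugate_fin_two, trace_fin_two_of, trace_fin_two, add_comm]

theorem trace_mul_adjugate_fin_two :
    trace (M * adjugate N) = trace M * trace N - trace (M * N) := by
  rw [adjugate_fin_two_eq_trace_smul_one_sub, mul_sub, trace_sub, mul_smul_comm, mul_one,
    trace_smul, smul_eq_mul, mul_comm (trace N)]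

theorem mul_mul_self_fin_two : N * M * N = trace (M * N) • N - det N • adjugate M := by
  have mul_eq : M * N = trace (M * N) • 1 - adjugate N * adjugate M := by
    rw [← adjugate_mul_distrib, adjugate_fin_two_eq_trace_smul_one_sub, sub_sub_cancel]
  calc N * M * N = N * (trace (M * N) • 1 - adjugate N * adjugate M) := by
        rw [mul_assoc, ← mul_eq]
    _ = trace (M * N) • N - det N • adjugate M := by
        rw [mul_sub, mul_smul_comm, mul_one, ← mul_assoc, mul_adjugate, smul_mul_assoc, one_mul]

theorem mul_add_mul_swap_fin_two :
    M * N + N * M = trace N • M + trace M • N + (trace (M * N) - trace M * trace N) • 1 := by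
  have adjugate_mul_eq : trace (M * N) • 1 - M * N = (trace N • 1 - N) * (trace M • 1 - M) := by
    simpa only [adjugate_fin_two_eq_trace_smul_one_sub] using adjugate_mul_distrib M N
  calc M * N + N * M
      = trace (M * N) • 1 - (trace N • 1 - N) * (trace M • 1 - M) + N * M := by
        rw [← adjugate_mul_eq, sub_sub_cancel]
    _ = _ := by
        simp only [sub_mul, mul_sub, smul_mul_assoc, mul_smul_comm, one_mul, mul_one]
        module

theorem trace_mul_mul_add_trace_mul_mul_swap_fin_two :
    trace (M * N * P) + trace (M * P * N) =
      trace M * trace (N * P) + trace N * trace (M * P) + trace P * trace (M * N)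
        - trace M * trace N * trace P := by
  rw [mul_assoc, mul_assoc, ← trace_add, ← mul_add, mul_add_mul_swap_fin_two]
  simp only [mul_add, mul_smul_comm, mul_one, trace_add, trace_smul, smul_eq_mul]
  ring

theorem trace_mul_mul_mul_repeat_fin_two :
    trace (M * N * P * N) =
      trace (M * N) * trace (P * N) - det N * (trace M * trace P - trace (M * P)) := by
  calc trace (M * N * P * N) = trace (M * (N * P * N)) := by simp only [mul_assoc]
    _ = trace (P * N) * trace (M * N) - det N * trace (M * adjugate P) := by
        rw [mul_mul_self_fin_two, mul_sub, trace_sub, mul_smul_comm, mul_smul_comm, trace_smul,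
          trace_smul, smul_eq_mul, smul_eq_mul]
    _ = _ := by rw [trace_mul_adjugate_fin_two, mul_comm (trace (P * N))]

theorem trace_mul_mul_adjugate_mul_fin_two :
    trace (M * N * adjugate M * N) =
      trace (M * N) * (trace M * trace N - trace (M * N)) - det N * (trace M ^ 2 - 2 * det M) := by
  have trace_mul_adjugate_self : trace (M * adjugate M) = 2 * det M := by
    rw [mul_adjugate, trace_smul, trace_one, smul_eq_mul, Fintype.card_fin, Nat.cast_ofNat,
      mul_comm]
  rw [trace_mul_mul_mul_repeat_fin_two, trace_mul_comm (adjugate M) N, trace_mul_adjugate_fin_two,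
    trace_mul_adjugate_self, trace_adjugate_fin_two, trace_mul_comm N M]
  ring

theorem trace_mul_mul_adjugate_mul_adjugate_fin_two :
    trace (M * N * adjugate M * adjugate N) =
      det N * trace M ^ 2 + det M * trace N ^ 2 + trace (M * N) ^ 2
        - trace M * trace N * trace (M * N) - 2 * det M * det N := by
  rw [trace_mul_adjugate_fin_two, trace_mul_mul_adjugate_cancel, trace_mul_mul_adjugate_mul_fin_two]
  ring

theorem trace_mul_mul_mul_mul_mul_swap_fin_two :
    trace (M * N * P * (M * P * N)) =
      trace (M * P) * trace (M * N * P * N) - det P * trace (M * N * adjugate M * N) := by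
  calc trace (M * N * P * (M * P * N)) = trace (M * N * (P * M * P) * N) := by
        simp only [mul_assoc]
    _ = _ := by
        rw [mul_mul_self_fin_two]
        simp only [mul_sub, sub_mul, mul_smul_comm, smul_mul_assoc, trace_sub, trace_smul,
          smul_eq_mul]

theorem trace_mul_mul_mul_trace_mul_mul_swap_fin_two :
    trace (M * N * P) * trace (M * P * N) =
      det N * det P * trace M ^ 2 + det M * det P * trace N ^ 2 + det M * det N * trace P ^ 2
        + det P * trace (M * N) ^ 2 + det M * trace (N * P) ^ 2 + det N * trace (M * P) ^ 2
        - det P * trace M * trace N * trace (M * N) - det M * trace N * trace P * trace (N * P)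
        - det N * trace M * trace P * trace (M * P)
        + trace (M * N) * trace (N * P) * trace (M * P) - 4 * det M * det N * det P := by
  have trace_mul_trace := trace_mul_adjugate_fin_two (M * N * P) (M * P * N)
  rw [trace_mul_mul_mul_adjugate_mul_mul_swap, trace_mul_mul_adjugate_mul_adjugate_fin_two,
    trace_mul_mul_mul_mul_mul_swap_fin_two, trace_mul_mul_mul_repeat_fin_two,
    trace_mul_mul_adjugate_mul_fin_two, trace_mul_comm P N] at trace_mul_trace
  linear_combination -trace_mul_trace

theorem fricke_relation_general {a b c d X Y Z δ₁ δ₂ δ₃ : R}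
    (ha : a = trace M) (hb : b = trace N) (hc : c = trace P) (hd : d = trace (M * N * P))
    (hX : X = trace (M * N)) (hY : Y = trace (N * P)) (hZ : Z = trace (M * P))
    (hδ₁ : δ₁ = det M) (hδ₂ : δ₂ = det N) (hδ₃ : δ₃ = det P) :
    δ₃ * X ^ 2 + δ₁ * Y ^ 2 + δ₂ * Z ^ 2 + X * Y * Z
      - (δ₃ * a * b + c * d) * X - (δ₁ * b * c + a * d) * Y - (δ₂ * a * c + b * d) * Z
      - (4 * δ₁ * δ₂ * δ₃ - δ₂ * δ₃ * a ^ 2 - δ₁ * δ₃ * b ^ 2 - δ₁ * δ₂ * c ^ 2 - d ^ 2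
        - a * b * c * d) = 0 := by
  subst ha hb hc hd hX hY hZ hδ₁ hδ₂ hδ₃
  linear_combination trace (M * N * P) * trace_mul_mul_add_trace_mul_mul_swap_fin_two M N P -
    trace_mul_mul_mul_trace_mul_mul_swap_fin_two M N P

end TwoByTwo

/-- The Fricke trace identity: for `M₁ M₂ M₃ ∈ SL(2,ℂ)`, with `a,b,c,d` the traces of
`M₁, M₂, M₃, M₁M₂M₃` and `X,Y,Z` the traces of `M₁M₂, M₂M₃, M₁M₃`, one has
`X² + Y² + Z² + XYZ − AX − BY − CZ − D = 0` where `A = ab+cd`, `B = bc+ad`, `C = ac+bd`,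
`D = 4 − a² − b² − c² − d² − abcd`. -/
theorem fricke_relation (M₁ M₂ M₃ : Matrix.SpecialLinearGroup (Fin 2) ℂ)
    (a b c d X Y Z A B C D : ℂ)
    (ha : a = Matrix.trace (M₁ : Matrix (Fin 2) (Fin 2) ℂ))
    (hb : b = Matrix.trace (M₂ : Matrix (Fin 2) (Fin 2) ℂ))
    (hc : c = Matrix.trace (M₃ : Matrix (Fin 2) (Fin 2) ℂ))
    (hd : d = Matrix.trace ((M₁ * M₂ * M₃ : Matrix.SpecialLinearGroup (Fin 2) ℂ) :
      Matrix (Fin 2) (Fin 2) ℂ))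
    (hX : X = Matrix.trace ((M₁ * M₂ : Matrix.SpecialLinearGroup (Fin 2) ℂ) :
      Matrix (Fin 2) (Fin 2) ℂ))
    (hY : Y = Matrix.trace ((M₂ * M₃ : Matrix.SpecialLinearGroup (Fin 2) ℂ) :
      Matrix (Fin 2) (Fin 2) ℂ))
    (hZ : Z = Matrix.trace ((M₁ * M₃ : Matrix.SpecialLinearGroup (Fin 2) ℂ) :
      Matrix (Fin 2) (Fin 2) ℂ))
    (hA : A = a * b + c * d) (hB : B = b * c + a * d) (hC : C = a * c + b * d)
    (hD : D = 4 - a ^ 2 - b ^ 2 - c ^ 2 - d ^ 2 - a * b * c * d) :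
    X ^ 2 + Y ^ 2 + Z ^ 2 + X * Y * Z - A * X - B * Y - C * Z - D = 0 := by
  subst hA hB hC hD
  simpa only [one_mul, mul_one] using fricke_relation_general _ _ _ ha hb hc hd hX hY hZ
    M₁.det_coe.symm M₂.det_coe.symm M₃.det_coe.symm
end

section
/- For every θ ∈ ℝ⁴, the quadruple of traces (2cos(π·Ok(θ)₁), 2cos(π·Ok(θ)₂), 2cos(π·Ok(θ)₃), 2cos(π·Ok(θ)₄)) has the same Fricke coefficients (A,B,C,D) as the quadruple (2cos(πθ₁), 2cos(πθ₂), 2cos(πθ₃), 2cos(πθ₄)). -/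
open Real

/-- The Okamoto transformation `Ok : ℝ⁴ → ℝ⁴`,
`Ok(θ)ᵢ = θᵢ − (θ₁+θ₂+θ₃+θ₄)/2 + 1`. -/
noncomputable def Ok (θ : Fin 4 → ℝ) : Fin 4 → ℝ :=
  fun i => θ i - (θ 0 + θ 1 + θ 2 + θ 3) / 2 + 1

/-- The Fricke coefficients `(A,B,C,D)` of a quadruple of traces `(a,b,c,d)`:
`A = ab+cd`, `B = bc+ad`, `C = ac+bd`, `D = 4−a²−b²−c²−d²−abcd`. -/
noncomputable def frickeCoeffs (a b c d : ℝ) : ℝ × ℝ × ℝ × ℝ :=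
  (a * b + c * d, b * c + a * d, a * c + b * d,
    4 - a ^ 2 - b ^ 2 - c ^ 2 - d ^ 2 - a * b * c * d)

/-!
On the angles `π * θ i`, the Okamoto transformation is `x ↦ x - s`, where `s` is half the sum of
the four angles, followed by a translation by `π` in every coordinate. The translation changes the
sign of every trace, and the Fricke coefficients are even. The map `x ↦ x - s` is the reflection in
the vector `(1, 1, 1, 1)`, and it replaces `s` by `-s`. Product-to-sum formulas turn each
coefficient into a sum of cosines of linear forms that the reflection permutes up to sign: in `A`
it exchanges `x + y` with `-(z + w)`, and in `D` it exchanges `2 * x` with `2 * (x - s)`. In fact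
the linear forms in `D` are the roots of a `D₄` root system, whose Weyl group contains the
reflection.
-/

theorem frickeCoeffs_neg (a b c d : ℝ) :
    frickeCoeffs (-a) (-b) (-c) (-d) = frickeCoeffs a b c d := by
  simp only [frickeCoeffs, neg_sq, mul_neg, neg_mul, neg_neg]

theorem eight_mul_cos_mul_cos_mul_cos_mul_cos (x y z w : ℝ) :
    8 * (cos x * cos y * cos z * cos w) =
      cos (x + y + z + w) + cos (x + y - z - w) + cos (x - y + z - w) + cos (x - y - z + w) +
        (cos (x - y - z - w) + cos (y - x - z - w) + cos (z - x - y - w) +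
          cos (w - x - y - z)) := by
  simp only [cos_add, cos_sub, sin_add, sin_sub]
  ring

section Reflection

variable {x y z w s : ℝ}

theorem cos_sub_mul_cos_sub_add_cos_sub_mul_cos_sub (hs : x + y + z + w = 2 * s) :
    cos (x - s) * cos (y - s) + cos (z - s) * cos (w - s) = cos x * cos y + cos z * cos w := by
  have cos_sum_xy : cos (x - s + (y - s)) = cos (z + w) := by
    rw [← cos_neg]; congr 1; linarith
  have cos_sum_zw : cos (z - s + (w - s)) = cos (x + y) := by
    rw [← cos_neg]; congr 1; linarith
  have product_xy := two_mul_cos_mul_cos (x - s) (y - s)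
  have product_zw := two_mul_cos_mul_cos (z - s) (w - s)
  rw [sub_sub_sub_cancel_right, cos_sum_xy] at product_xy
  rw [sub_sub_sub_cancel_right, cos_sum_zw] at product_zw
  linear_combination (product_xy + product_zw - two_mul_cos_mul_cos x y -
    two_mul_cos_mul_cos z w) / 2

/-- The right-hand side is visibly unchanged when each of `x`, `y`, `z`, `w` is decreased by `s` and
`s` is replaced by `-s`. -/
theorem sum_cos_sq_add_four_mul_prod_cos (hs : x + y + z + w = 2 * s) :
    cos x ^ 2 + cos y ^ 2 + cos z ^ 2 + cos w ^ 2 + 4 * (cos x * cos y * cos z * cos w) =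
      2 + (cos (2 * x) + cos (2 * y) + cos (2 * z) + cos (2 * w) +
        (cos (2 * (x - s)) + cos (2 * (y - s)) + cos (2 * (z - s)) + cos (2 * (w - s))) +
        (cos (2 * s) + cos (x + y - z - w) + cos (x - y + z - w) + cos (x - y - z + w))) / 2 := by
  have product := eight_mul_cos_mul_cos_mul_cos_mul_cos x y z w
  rw [hs, show x - y - z - w = 2 * (x - s) by linarith,
    show y - x - z - w = 2 * (y - s) by linarith, show z - x - y - w = 2 * (z - s) by linarith,
    show w - x - y - z = 2 * (w - s) by linarith] at product
  linear_combination product / 2 + cos_sq x + cos_sq y + cos_sq z + cos_sq w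

theorem sum_cos_sub_sq_add_four_mul_prod_cos_sub (hs : x + y + z + w = 2 * s) :
    cos (x - s) ^ 2 + cos (y - s) ^ 2 + cos (z - s) ^ 2 + cos (w - s) ^ 2 +
        4 * (cos (x - s) * cos (y - s) * cos (z - s) * cos (w - s)) =
      cos x ^ 2 + cos y ^ 2 + cos z ^ 2 + cos w ^ 2 + 4 * (cos x * cos y * cos z * cos w) := by
  have reflected_sum : x - s + (y - s) + (z - s) + (w - s) = 2 * -s := by linarith
  rw [sum_cos_sq_add_four_mul_prod_cos reflected_sum, sum_cos_sq_add_four_mul_prod_cos hs]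
  simp only [sub_neg_eq_add, sub_add_cancel, mul_neg, cos_neg]
  ring_nf

theorem frickeCoeffs_two_mul_cos_sub (hs : x + y + z + w = 2 * s) :
    frickeCoeffs (2 * cos (x - s)) (2 * cos (y - s)) (2 * cos (z - s)) (2 * cos (w - s)) =
      frickeCoeffs (2 * cos x) (2 * cos y) (2 * cos z) (2 * cos w) := by
  have hA := cos_sub_mul_cos_sub_add_cos_sub_mul_cos_sub hs
  have hB := cos_sub_mul_cos_sub_add_cos_sub_mul_cos_sub
    (show y + z + x + w = 2 * s by linarith)
  have hC := cos_sub_mul_cos_sub_add_cos_sub_mul_cos_sub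
    (show x + z + y + w = 2 * s by linarith)
  have hD := sum_cos_sub_sq_add_four_mul_prod_cos_sub hs
  simp only [frickeCoeffs, Prod.mk.injEq]
  refine ⟨?_, ?_, ?_, ?_⟩
  · linear_combination 4 * hA
  · linear_combination 4 * hB
  · linear_combination 4 * hC
  · linear_combination -4 * hD

end Reflection

theorem cos_pi_mul_Ok (θ : Fin 4 → ℝ) (i : Fin 4) :
    cos (π * Ok θ i) = -cos (π * θ i - π * ((θ 0 + θ 1 + θ 2 + θ 3) / 2)) := by
  rw [← cos_add_pi, Ok, mul_add_one, mul_sub]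

/-- The quadruple of traces associated to the Okamoto transform `Ok(θ)` of an angle
vector `θ` has the same Fricke coefficients as the quadruple associated to `θ`. -/
theorem frickeCoeffs_Ok_invariant (θ : Fin 4 → ℝ) :
    frickeCoeffs (2 * cos (π * Ok θ 0)) (2 * cos (π * Ok θ 1))
        (2 * cos (π * Ok θ 2)) (2 * cos (π * Ok θ 3)) =
      frickeCoeffs (2 * cos (π * θ 0)) (2 * cos (π * θ 1))
        (2 * cos (π * θ 2)) (2 * cos (π * θ 3)) := by
  simp only [cos_pi_mul_Ok, mul_neg, frickeCoeffs_neg]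
  exact frickeCoeffs_two_mul_cos_sub (by ring)
end

section
/- For every θ ∈ ℝ⁴, the quadruple of traces (2cos(π·Õk(θ)₁), 2cos(π·Õk(θ)₂), 2cos(π·Õk(θ)₃), 2cos(π·Õk(θ)₄)) has the same Fricke coefficients (A,B,C,D) as the quadruple (2cos(πθ₁), 2cos(πθ₂), 2cos(πθ₃), 2cos(πθ₄)). -/
open Real

/-- The Okamoto transformation `Õk : ℝ⁴ → ℝ⁴`,
`Õk(θ₁,θ₂,θ₃,θ₄) = ((θ₁−θ₂−θ₃+θ₄)/2, (−θ₁+θ₂−θ₃+θ₄)/2, (−θ₁−θ₂+θ₃+θ₄)/2, (θ₁+θ₂+θ₃+θ₄)/2)`. -/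
noncomputable def OkTilde (θ : Fin 4 → ℝ) : Fin 4 → ℝ :=
  ![(θ 0 - θ 1 - θ 2 + θ 3) / 2,
    (-θ 0 + θ 1 - θ 2 + θ 3) / 2,
    (-θ 0 - θ 1 + θ 2 + θ 3) / 2,
    (θ 0 + θ 1 + θ 2 + θ 3) / 2]

/-!
By the product-to-sum formulas, `A` and `D` are symmetric polynomials in the cosines of the four
angles `θ₁ ± θ₂` and `θ₄ ± θ₃`. The Okamoto transformation exchanges `θ₁ + θ₂` with `θ₄ - θ₃` and
fixes the other two, so it preserves `A` and `D`. It also commutes with the permutations of the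
first three coordinates, and these turn `A` into `B` and `C`.
-/

theorem OkTilde_apply (θ : Fin 4 → ℝ) (i : Fin 4) :
    OkTilde θ i = if i = 3 then (∑ j, θ j) / 2 else θ i + θ 3 - (∑ j, θ j) / 2 := by
  fin_cases i <;> simp [OkTilde, Fin.sum_univ_four] <;> ring

theorem OkTilde_smul (r : ℝ) (θ : Fin 4 → ℝ) : OkTilde (r • θ) = r • OkTilde θ := by
  ext i
  simp only [OkTilde_apply, Pi.smul_apply, smul_eq_mul, ← Finset.mul_sum]
  split_ifs <;> ring

theorem OkTilde_comp_perm (θ : Fin 4 → ℝ) {σ : Equiv.Perm (Fin 4)} (hσ : σ 3 = 3) :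
    OkTilde (θ ∘ σ) = OkTilde θ ∘ σ := by
  ext i
  have apply_eq_three_iff : σ i = 3 ↔ i = 3 := by rw [← σ.apply_eq_iff_eq (x := i), hσ]
  simp only [OkTilde_apply, Function.comp_apply, Equiv.sum_comp σ θ, hσ, apply_eq_three_iff]

theorem OkTilde_zero_add_one (θ : Fin 4 → ℝ) : OkTilde θ 0 + OkTilde θ 1 = θ 3 - θ 2 := by
  simp only [OkTilde, Matrix.cons_val]
  ring

theorem OkTilde_zero_sub_one (θ : Fin 4 → ℝ) : OkTilde θ 0 - OkTilde θ 1 = θ 0 - θ 1 := by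
  simp only [OkTilde, Matrix.cons_val]
  ring

theorem OkTilde_three_add_two (θ : Fin 4 → ℝ) : OkTilde θ 3 + OkTilde θ 2 = θ 3 + θ 2 := by
  simp only [OkTilde, Matrix.cons_val]
  ring

theorem OkTilde_three_sub_two (θ : Fin 4 → ℝ) : OkTilde θ 3 - OkTilde θ 2 = θ 0 + θ 1 := by
  simp only [OkTilde, Matrix.cons_val]
  ring

theorem cos_sq_add_cos_sq (x y : ℝ) :
    cos x ^ 2 + cos y ^ 2 = 1 + cos (x + y) * cos (x - y) := by
  rw [cos_add, cos_sub]
  linear_combination sin y ^ 2 * sin_sq_add_cos_sq x + (1 - cos x ^ 2) * sin_sq_add_cos_sq y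

/-- The Fricke coefficients of the traces `2 cos φᵢ` with angles `φ`. The angles are in radians, so
the angle vector `θ` of the paper corresponds to `φ = π • θ`. -/
noncomputable def angleFrickeCoeffs (φ : Fin 4 → ℝ) : ℝ × ℝ × ℝ × ℝ :=
  frickeCoeffs (2 * cos (φ 0)) (2 * cos (φ 1)) (2 * cos (φ 2)) (2 * cos (φ 3))

section angleFrickeCoeffs

variable (φ : Fin 4 → ℝ)

theorem angleFrickeCoeffs_A_eq :
    (angleFrickeCoeffs φ).1 =
      2 * (cos (φ 0 + φ 1) + cos (φ 0 - φ 1) + cos (φ 3 + φ 2) + cos (φ 3 - φ 2)) := by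
  simp only [angleFrickeCoeffs, frickeCoeffs]
  linear_combination
    2 * two_mul_cos_mul_cos (φ 0) (φ 1) + 2 * two_mul_cos_mul_cos (φ 3) (φ 2)

theorem angleFrickeCoeffs_D_eq :
    (angleFrickeCoeffs φ).2.2.2 =
      -4 * (1 + cos (φ 0 + φ 1) * cos (φ 0 - φ 1) + cos (φ 3 + φ 2) * cos (φ 3 - φ 2) +
        (cos (φ 0 + φ 1) + cos (φ 0 - φ 1)) * (cos (φ 3 + φ 2) + cos (φ 3 - φ 2))) := by
  have prod_eq : (2 * cos (φ 0) * cos (φ 1)) * (2 * cos (φ 3) * cos (φ 2)) =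
      (cos (φ 0 - φ 1) + cos (φ 0 + φ 1)) * (cos (φ 3 - φ 2) + cos (φ 3 + φ 2)) := by
    rw [two_mul_cos_mul_cos, two_mul_cos_mul_cos]
  simp only [angleFrickeCoeffs, frickeCoeffs]
  linear_combination
    -4 * cos_sq_add_cos_sq (φ 0) (φ 1) - 4 * cos_sq_add_cos_sq (φ 3) (φ 2) - 4 * prod_eq

theorem angleFrickeCoeffs_B_eq_A_comp_swap :
    (angleFrickeCoeffs φ).2.1 = (angleFrickeCoeffs (φ ∘ Equiv.swap 0 2)).1 := by
  have swap_one : Equiv.swap (0 : Fin 4) 2 1 = 1 := by decide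
  have swap_three : Equiv.swap (0 : Fin 4) 2 3 = 3 := by decide
  simp only [angleFrickeCoeffs, frickeCoeffs, Function.comp_apply, Equiv.swap_apply_left,
    Equiv.swap_apply_right, swap_one, swap_three]
  ring

theorem angleFrickeCoeffs_C_eq_A_comp_swap :
    (angleFrickeCoeffs φ).2.2.1 = (angleFrickeCoeffs (φ ∘ Equiv.swap 1 2)).1 := by
  have swap_zero : Equiv.swap (1 : Fin 4) 2 0 = 0 := by decide
  have swap_three : Equiv.swap (1 : Fin 4) 2 3 = 3 := by decide
  simp only [angleFrickeCoeffs, frickeCoeffs, Function.comp_apply, Equiv.swap_apply_left,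
    Equiv.swap_apply_right, swap_zero, swap_three]

theorem angleFrickeCoeffs_OkTilde_A :
    (angleFrickeCoeffs (OkTilde φ)).1 = (angleFrickeCoeffs φ).1 := by
  rw [angleFrickeCoeffs_A_eq, angleFrickeCoeffs_A_eq, OkTilde_zero_add_one, OkTilde_zero_sub_one,
    OkTilde_three_add_two, OkTilde_three_sub_two]
  ring

theorem angleFrickeCoeffs_OkTilde_B :
    (angleFrickeCoeffs (OkTilde φ)).2.1 = (angleFrickeCoeffs φ).2.1 := by
  rw [angleFrickeCoeffs_B_eq_A_comp_swap, angleFrickeCoeffs_B_eq_A_comp_swap,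
    ← OkTilde_comp_perm φ (by decide), angleFrickeCoeffs_OkTilde_A]

theorem angleFrickeCoeffs_OkTilde_C :
    (angleFrickeCoeffs (OkTilde φ)).2.2.1 = (angleFrickeCoeffs φ).2.2.1 := by
  rw [angleFrickeCoeffs_C_eq_A_comp_swap, angleFrickeCoeffs_C_eq_A_comp_swap,
    ← OkTilde_comp_perm φ (by decide), angleFrickeCoeffs_OkTilde_A]

theorem angleFrickeCoeffs_OkTilde_D :
    (angleFrickeCoeffs (OkTilde φ)).2.2.2 = (angleFrickeCoeffs φ).2.2.2 := by
  rw [angleFrickeCoeffs_D_eq, angleFrickeCoeffs_D_eq, OkTilde_zero_add_one, OkTilde_zero_sub_one,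
    OkTilde_three_add_two, OkTilde_three_sub_two]
  ring

theorem angleFrickeCoeffs_OkTilde : angleFrickeCoeffs (OkTilde φ) = angleFrickeCoeffs φ :=
  Prod.ext (angleFrickeCoeffs_OkTilde_A φ) <| Prod.ext (angleFrickeCoeffs_OkTilde_B φ) <|
    Prod.ext (angleFrickeCoeffs_OkTilde_C φ) (angleFrickeCoeffs_OkTilde_D φ)

end angleFrickeCoeffs

/-- The quadruple of traces associated to the Okamoto transform `Õk(θ)` of an angle
vector `θ` has the same Fricke coefficients as the quadruple associated to `θ`. -/
theorem frickeCoeffs_OkTilde_invariant (θ : Fin 4 → ℝ) :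
    frickeCoeffs (2 * cos (π * OkTilde θ 0)) (2 * cos (π * OkTilde θ 1))
        (2 * cos (π * OkTilde θ 2)) (2 * cos (π * OkTilde θ 3)) =
      frickeCoeffs (2 * cos (π * θ 0)) (2 * cos (π * θ 1))
        (2 * cos (π * θ 2)) (2 * cos (π * θ 3)) := by
  change angleFrickeCoeffs (π • OkTilde θ) = angleFrickeCoeffs (π • θ)
  rw [← OkTilde_smul, angleFrickeCoeffs_OkTilde]
end

section
/- Let a, b, c, d be real numbers with |a| < 2, |b| < 2, |c| < 2, |d| < 2. If the Fricke coefficients of (a,b,c,d) satisfy (A,B,C,D) = (0,0,0,4), i.e. ab+cd = 0, bc+ad = 0, ac+bd = 0 and 4−a²−b²−c²−d²−abcd = 4, then a = b = c = d = 0. -/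
/-!
The equation `D = 4` says `a² + b² + c² + d² = -abcd`. With `S` denoting this common value,
the inequality of arithmetic and geometric means for the four squares reads `16 S ≤ S²`, so either
`S = 0` or `S ≥ 16`. The second case is impossible when `|abcd| < 16`, in particular when all four
traces lie in `(-2, 2)`; the Cayley quadruples `(±2, ±2, ±2, ∓2)` attain `S = 16`.
-/

section LinearOrderedRing

variable {R : Type*} [CommRing R] [LinearOrder R] [IsStrictOrderedRing R] {a b c d r : R}

theorem two_mul_abs_mul_le_sq_add_sq (a b : R) : 2 * |a * b| ≤ a ^ 2 + b ^ 2 := by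
  simpa only [abs_mul, sq_abs, mul_assoc] using two_mul_le_add_sq |a| |b|

theorem sixteen_mul_abs_mul_mul_mul_le_sq_sum_sq (a b c d : R) :
    16 * |a * b * c * d| ≤ (a ^ 2 + b ^ 2 + c ^ 2 + d ^ 2) ^ 2 :=
  calc 16 * |a * b * c * d| = 4 * (2 * |a * b|) * (2 * |c * d|) := by
        rw [mul_assoc (a * b), abs_mul (a * b)]; ring
    _ ≤ (2 * |a * b| + 2 * |c * d|) ^ 2 := four_mul_le_sq_add _ _
    _ ≤ (a ^ 2 + b ^ 2 + (c ^ 2 + d ^ 2)) ^ 2 := by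
        gcongr <;> exact two_mul_abs_mul_le_sq_add_sq _ _
    _ = (a ^ 2 + b ^ 2 + c ^ 2 + d ^ 2) ^ 2 := by ring

theorem sum_four_sq_eq_zero_iff :
    a ^ 2 + b ^ 2 + c ^ 2 + d ^ 2 = 0 ↔ a = 0 ∧ b = 0 ∧ c = 0 ∧ d = 0 := by
  rw [add_eq_zero_iff_of_nonneg (by positivity) (by positivity),
    add_eq_zero_iff_of_nonneg (by positivity) (by positivity),
    add_eq_zero_iff_of_nonneg (by positivity) (by positivity)]
  simp only [sq_eq_zero_iff, and_assoc]

theorem abs_mul_mul_mul_lt_pow_four (ha : |a| < r) (hb : |b| < r) (hc : |c| < r) (hd : |d| < r) :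
    |a * b * c * d| < r ^ 4 :=
  calc |a * b * c * d| = |a| * |b| * |c| * |d| := by simp only [abs_mul]
    _ < r * r * r * r := by apply_rules [mul_lt_mul'', mul_nonneg, abs_nonneg]
    _ = r ^ 4 := by ring

theorem cayley_traces_zero_general (habcd : |a * b * c * d| < 16)
    (hD : 4 - a ^ 2 - b ^ 2 - c ^ 2 - d ^ 2 - a * b * c * d = 4) :
    a = 0 ∧ b = 0 ∧ c = 0 ∧ d = 0 := by
  rw [← sum_four_sq_eq_zero_iff]
  have amgm := sixteen_mul_abs_mul_mul_mul_le_sq_sum_sq a b c d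
  have hS_nonneg : 0 ≤ a ^ 2 + b ^ 2 + c ^ 2 + d ^ 2 := by positivity
  have hS : a * b * c * d = -(a ^ 2 + b ^ 2 + c ^ 2 + d ^ 2) := by linear_combination -hD
  rw [hS, abs_neg, abs_of_nonneg hS_nonneg] at habcd amgm
  by_contra hS_ne
  have hS_pos := hS_nonneg.lt_of_ne' hS_ne
  rw [sq (a ^ 2 + b ^ 2 + c ^ 2 + d ^ 2)] at amgm
  exact habcd.not_ge (le_of_mul_le_mul_right amgm hS_pos)

end LinearOrderedRing

/-- If `a,b,c,d ∈ (−2,2)` have Fricke coefficients `(A,B,C,D) = (0,0,0,4)`,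
then `a = b = c = d = 0`. -/
theorem cayley_traces_zero (a b c d : ℝ)
    (ha : |a| < 2) (hb : |b| < 2) (hc : |c| < 2) (hd : |d| < 2)
    (hA : a * b + c * d = 0) (hB : b * c + a * d = 0) (hC : a * c + b * d = 0)
    (hD : 4 - a ^ 2 - b ^ 2 - c ^ 2 - d ^ 2 - a * b * c * d = 4) :
    a = 0 ∧ b = 0 ∧ c = 0 ∧ d = 0 :=
  cayley_traces_zero_general ((abs_mul_mul_mul_lt_pow_four ha hb hc hd).trans_eq (by norm_num)) hD
end

section
/- Let α = (α₁,α₂,α₃,α₄) with each αᵢ ∈ (0,2π), and set tᵢ = 2cos(αᵢ/2). If the Fricke coefficients of (t₁,t₂,t₃,t₄) equal (0,0,0,4), then α = (π,π,π,π); in particular α₁+α₂+α₃+α₄ = 4π, so the angle condition α₁+α₂+α₃+α₄ > 6π fails. -/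
open Real

/-!
Let `S` be the sum of the squares of the traces and `P` their product, so that `D = 4` reads
`S + P = 0`. The AM-GM inequality gives `-16 P ≤ S² = P²`, and `P > -16` since the traces lie in
`(-2, 2)`. Hence `P ≥ 0`, so `S ≤ 0` and every trace `2cos(αᵢ/2)` vanishes.
-/

section OrderedRing

variable {R : Type*} [CommRing R] [LinearOrder R] [IsStrictOrderedRing R]

theorem abs_prod_lt_pow_card {ι : Type*} {s : Finset ι} (hs : s.Nonempty) {f : ι → R} {c : R}
    (hf : ∀ i ∈ s, |f i| < c) : |∏ i ∈ s, f i| < c ^ s.card := by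
  induction hs using Finset.Nonempty.cons_induction with
  | singleton a => simpa using hf
  | cons a s ha _ ih =>
    rw [Finset.forall_mem_cons] at hf
    rw [Finset.prod_cons, Finset.card_cons, abs_mul, pow_succ']
    exact mul_lt_mul'' hf.1 (ih hf.2) (abs_nonneg _) (abs_nonneg _)

theorem neg_sixteen_mul_prod_le_sum_sq_sq (t : Fin 4 → R) :
    -16 * ∏ i, t i ≤ (∑ i, t i ^ 2) ^ 2 := by
  have sum_of_squares : (∑ i, t i ^ 2) ^ 2 - -16 * ∏ i, t i =
      (t 0 ^ 2 + t 1 ^ 2 - t 2 ^ 2 - t 3 ^ 2) ^ 2 +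
        (2 * (t 0 * t 2 + t 1 * t 3)) ^ 2 + (2 * (t 1 * t 2 + t 0 * t 3)) ^ 2 := by
    rw [Fin.sum_univ_four, Fin.prod_univ_four]
    ring
  rw [← sub_nonneg, sum_of_squares]
  positivity

theorem eq_zero_of_sum_sq_add_prod_eq_zero {t : Fin 4 → R} (hprod : -16 < ∏ i, t i)
    (h : ∑ i, t i ^ 2 + ∏ i, t i = 0) : t = 0 := by
  have sum_eq : ∑ i, t i ^ 2 = -∏ i, t i := eq_neg_of_add_eq_zero_left h
  have prod_nonneg : 0 ≤ ∏ i, t i := by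
    have amgm := neg_sixteen_mul_prod_le_sum_sq_sq t
    rw [sum_eq] at amgm
    have shifted_mul_nonneg : 0 ≤ (16 + ∏ i, t i) * ∏ i, t i := by linear_combination amgm
    exact nonneg_of_mul_nonneg_right shifted_mul_nonneg (neg_lt_iff_pos_add'.mp hprod)
  have sum_nonpos : ∑ i, t i ^ 2 ≤ 0 := sum_eq ▸ neg_nonpos.mpr prod_nonneg
  have sum_eq_zero := sum_nonpos.antisymm (Finset.sum_nonneg fun i _ => sq_nonneg (t i))
  rw [Finset.sum_eq_zero_iff_of_nonneg fun i _ => sq_nonneg (t i)] at sum_eq_zero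
  exact funext fun i => pow_eq_zero_iff two_ne_zero |>.mp (sum_eq_zero i (Finset.mem_univ i))

end OrderedRing

theorem abs_cos_lt_one_of_mem_Ioo {x : ℝ} (hx : x ∈ Set.Ioo 0 π) : |cos x| < 1 := by
  rw [← sq_lt_one_iff_abs_lt_one, cos_sq']
  exact sub_lt_self 1 (pow_pos (sin_pos_of_mem_Ioo hx) 2)

theorem eq_pi_div_two_of_cos_eq_zero {x : ℝ} (hx : x ∈ Set.Icc 0 π) (h : cos x = 0) :
    x = π / 2 := by
  rw [← arccos_cos hx.1 hx.2, h, arccos_zero]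

theorem cayley_angles_eq_pi_general (α : Fin 4 → ℝ) (hα : ∀ i, α i ∈ Set.Ioo 0 (2 * π))
    (t : Fin 4 → ℝ) (ht : ∀ i, t i = 2 * cos (α i / 2))
    (hD : 4 - t 0 ^ 2 - t 1 ^ 2 - t 2 ^ 2 - t 3 ^ 2 - t 0 * t 1 * t 2 * t 3 = 4) :
    (∀ i, α i = π) ∧ α 0 + α 1 + α 2 + α 3 = 4 * π ∧
      ¬ (α 0 + α 1 + α 2 + α 3 > 6 * π) := by
  have half_mem (i) : α i / 2 ∈ Set.Ioo 0 π :=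
    ⟨half_pos (hα i).1, (div_lt_iff₀' two_pos).mpr (hα i).2⟩
  have abs_trace_lt (i) : |t i| < 2 := by
    rw [ht, abs_mul, abs_two]
    exact mul_lt_of_lt_one_right two_pos (abs_cos_lt_one_of_mem_Ioo (half_mem i))
  have prod_gt : -16 < ∏ i, t i := by
    have abs_prod_lt : |∏ i, t i| < 2 ^ 4 :=
      abs_prod_lt_pow_card Finset.univ_nonempty fun i _ => abs_trace_lt i
    linarith [neg_lt_of_abs_lt abs_prod_lt]
  have trace_eq_zero : t = 0 := eq_zero_of_sum_sq_add_prod_eq_zero prod_gt <| by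
    rw [Fin.sum_univ_four, Fin.prod_univ_four]
    linear_combination -hD
  have angle_eq (i) : α i = π := by
    have cos_eq_zero : cos (α i / 2) = 0 := by simpa [trace_eq_zero] using ht i
    linarith [eq_pi_div_two_of_cos_eq_zero (Set.Ioo_subset_Icc_self (half_mem i)) cos_eq_zero]
  have sum_eq : α 0 + α 1 + α 2 + α 3 = 4 * π := by
    simp only [angle_eq]
    ring
  exact ⟨angle_eq, sum_eq, by linarith [pi_pos]⟩

/-- If `α ∈ (0,2π)⁴` is an angle vector whose associated peripheral traces
`tᵢ = 2cos(αᵢ/2)` have Fricke coefficients `(0,0,0,4)`, then `α = (π,π,π,π)`;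
in particular the sum of the angles is `4π` and the angle condition
`α₁+α₂+α₃+α₄ > 6π` fails. -/
theorem cayley_angles_eq_pi (α : Fin 4 → ℝ) (hα : ∀ i, α i ∈ Set.Ioo 0 (2 * π))
    (t : Fin 4 → ℝ) (ht : ∀ i, t i = 2 * cos (α i / 2))
    (hA : t 0 * t 1 + t 2 * t 3 = 0)
    (hB : t 1 * t 2 + t 0 * t 3 = 0)
    (hC : t 0 * t 2 + t 1 * t 3 = 0)
    (hD : 4 - t 0 ^ 2 - t 1 ^ 2 - t 2 ^ 2 - t 3 ^ 2 - t 0 * t 1 * t 2 * t 3 = 4) :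
    (∀ i, α i = π) ∧ α 0 + α 1 + α 2 + α 3 = 4 * π ∧
      ¬ (α 0 + α 1 + α 2 + α 3 > 6 * π) :=
  cayley_angles_eq_pi_general α hα t ht hD
end

section
/- Let t₁, t₂, t₃, t₄ be real numbers with |tᵢ| < 2 for each i, and for each i let ᾱᵢ be the unique number in [π, 2π) satisfying 2cos(ᾱᵢ/2) = −|tᵢ|. If the Benedetto–Goldman inequality 2(t₁²+t₂²+t₃²+t₄²) − t₁t₂t₃t₄ − 16 > √((4−t₁²)(4−t₂²)(4−t₃²)(4−t₄²)) holds, then ᾱ₁+ᾱ₂+ᾱ₃+ᾱ₄ > 6π. -/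
open Real

/-!
Put `βᵢ = π - ᾱᵢ / 2 ∈ (0, π / 2]`, so that `|tᵢ| = 2 cos βᵢ` and `√(4 - tᵢ²) = 2 sin βᵢ`, and the
claim becomes `β₀ + β₁ + β₂ + β₃ < π`. Replacing `-t₀t₁t₂t₃` by its absolute value only weakens the
inequality, which then says that `(cos (β₀ + β₁) + cos (β₂ + β₃)) * (cos (β₀ - β₁) + cos (β₂ - β₃))`
is positive. The second factor is nonnegative, so the first is positive, and since cosine is
decreasing on `[0, π]` this means `β₀ + β₁ < π - (β₂ + β₃)`.
-/

theorem cos_add_cos_pos_iff {x y : ℝ} (hx : x ∈ Set.Icc 0 π) (hy : y ∈ Set.Icc 0 π) :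
    0 < cos x + cos y ↔ x + y < π := by
  have hy' : π - y ∈ Set.Icc 0 π := ⟨sub_nonneg.2 hy.2, sub_le_self π hy.1⟩
  rw [← lt_sub_iff_add_lt, ← strictAntiOn_cos.lt_iff_gt hy' hx, cos_pi_sub, neg_lt_iff_pos_add]

theorem cos_add_add_cos_add_mul_cos_sub_add_cos_sub (a b c d : ℝ) :
    (cos (a + b) + cos (c + d)) * (cos (a - b) + cos (c - d)) =
      cos a ^ 2 + cos b ^ 2 + cos c ^ 2 + cos d ^ 2 - 2 + 2 * (cos a * cos b * cos c * cos d) -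
        2 * (sin a * sin b * sin c * sin d) := by
  rw [cos_add, cos_add, cos_sub, cos_sub]
  linear_combination (-sin b ^ 2) * sin_sq a - (1 - cos a ^ 2) * sin_sq b -
    sin d ^ 2 * sin_sq c - (1 - cos c ^ 2) * sin_sq d

theorem cos_sub_nonneg_of_mem_Icc {x y : ℝ} (hx : x ∈ Set.Icc 0 (π / 2))
    (hy : y ∈ Set.Icc 0 (π / 2)) : 0 ≤ cos (x - y) :=
  cos_nonneg_of_mem_Icc ⟨by linarith [hx.1, hy.2], by linarith [hx.2, hy.1]⟩

theorem add_lt_pi_of_two_mul_sin_mul_lt {a b c d : ℝ}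
    (ha : a ∈ Set.Icc 0 (π / 2)) (hb : b ∈ Set.Icc 0 (π / 2))
    (hc : c ∈ Set.Icc 0 (π / 2)) (hd : d ∈ Set.Icc 0 (π / 2))
    (h : 2 * (sin a * sin b * sin c * sin d) <
      cos a ^ 2 + cos b ^ 2 + cos c ^ 2 + cos d ^ 2 - 2 + 2 * (cos a * cos b * cos c * cos d)) :
    a + b + c + d < π := by
  have add_mem {x y : ℝ} (hx : x ∈ Set.Icc 0 (π / 2)) (hy : y ∈ Set.Icc 0 (π / 2)) :
      x + y ∈ Set.Icc 0 π := ⟨add_nonneg hx.1 hy.1, by linarith [hx.2, hy.2]⟩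
  have prod_pos : 0 < (cos (a + b) + cos (c + d)) * (cos (a - b) + cos (c - d)) := by
    rwa [cos_add_add_cos_add_mul_cos_sub_add_cos_sub, sub_pos]
  have cos_sub_sum_nonneg : 0 ≤ cos (a - b) + cos (c - d) :=
    add_nonneg (cos_sub_nonneg_of_mem_Icc ha hb) (cos_sub_nonneg_of_mem_Icc hc hd)
  have cos_add_sum_pos : 0 < cos (a + b) + cos (c + d) :=
    pos_of_mul_pos_left prod_pos cos_sub_sum_nonneg
  rw [add_assoc (a + b)]
  exact (cos_add_cos_pos_iff (add_mem ha hb) (add_mem hc hd)).1 cos_add_sum_pos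

theorem four_sub_sq_of_abs_eq_two_mul_cos {t β : ℝ} (h : |t| = 2 * cos β) :
    4 - t ^ 2 = (2 * sin β) ^ 2 := by
  rw [← sq_abs, h]
  linear_combination -4 * sin_sq β

theorem add_lt_pi_of_benedetto_goldman {t β : Fin 4 → ℝ} (hβ : ∀ i, β i ∈ Set.Icc 0 (π / 2))
    (ht : ∀ i, |t i| = 2 * cos (β i))
    (hBG : √((4 - t 0 ^ 2) * (4 - t 1 ^ 2) * (4 - t 2 ^ 2) * (4 - t 3 ^ 2)) <
      2 * (t 0 ^ 2 + t 1 ^ 2 + t 2 ^ 2 + t 3 ^ 2) - t 0 * t 1 * t 2 * t 3 - 16) :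
    β 0 + β 1 + β 2 + β 3 < π := by
  have two_mul_sin_nonneg (i) : 0 ≤ 2 * sin (β i) :=
    mul_nonneg zero_le_two <| sin_nonneg_of_nonneg_of_le_pi (hβ i).1 <|
      (hβ i).2.trans (half_le_self pi_nonneg)
  have sqrt_eq : √((4 - t 0 ^ 2) * (4 - t 1 ^ 2) * (4 - t 2 ^ 2) * (4 - t 3 ^ 2)) =
      2 * sin (β 0) * (2 * sin (β 1)) * (2 * sin (β 2)) * (2 * sin (β 3)) := by
    simp only [four_sub_sq_of_abs_eq_two_mul_cos (ht _), sqrt_mul' _ (sq_nonneg _),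
      sqrt_sq (two_mul_sin_nonneg _)]
  have neg_prod_le : -(t 0 * t 1 * t 2 * t 3) ≤
      2 * cos (β 0) * (2 * cos (β 1)) * (2 * cos (β 2)) * (2 * cos (β 3)) := by
    simpa only [abs_mul, ht] using neg_le_abs (t 0 * t 1 * t 2 * t 3)
  have sq_eq (i) : t i ^ 2 = (2 * cos (β i)) ^ 2 := by rw [← ht, sq_abs]
  rw [sqrt_eq, sq_eq, sq_eq, sq_eq, sq_eq] at hBG
  exact add_lt_pi_of_two_mul_sin_mul_lt (hβ 0) (hβ 1) (hβ 2) (hβ 3) (by linarith)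

/-- If `t₁,t₂,t₃,t₄ ∈ (−2,2)` satisfy the Benedetto–Goldman inequality, then the angles
`ᾱᵢ ∈ [π,2π)` characterized by `2cos(ᾱᵢ/2) = −|tᵢ|` satisfy `ᾱ₁+ᾱ₂+ᾱ₃+ᾱ₄ > 6π`. -/
theorem benedetto_goldman_angle_condition (t ᾱ : Fin 4 → ℝ)
    (ht : ∀ i, |t i| < 2)
    (hᾱ : ∀ i, ᾱ i ∈ Set.Ico π (2 * π))
    (hcos : ∀ i, 2 * cos (ᾱ i / 2) = -|t i|)
    (hBG : 2 * (t 0 ^ 2 + t 1 ^ 2 + t 2 ^ 2 + t 3 ^ 2) - t 0 * t 1 * t 2 * t 3 - 16 >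
      Real.sqrt ((4 - t 0 ^ 2) * (4 - t 1 ^ 2) * (4 - t 2 ^ 2) * (4 - t 3 ^ 2))) :
    ᾱ 0 + ᾱ 1 + ᾱ 2 + ᾱ 3 > 6 * π := by
  have mem_Icc (i) : π - ᾱ i / 2 ∈ Set.Icc 0 (π / 2) :=
    ⟨by linarith [(hᾱ i).2], by linarith [(hᾱ i).1]⟩
  have abs_eq (i) : |t i| = 2 * cos (π - ᾱ i / 2) := by
    rw [cos_pi_sub]
    linarith [hcos i]
  linarith [add_lt_pi_of_benedetto_goldman mem_Icc abs_eq hBG]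
end

section
/- For every real number θ with 5π/3 < θ < 2π and every δ ∈ {2π/3, π, 4π/3}, one has cos(δ/2) ≠ (1 − 2cos(θ)) / (4cos(θ/2)). -/
open Real

/-!
With `x = cos (θ / 2)` the right-hand side is `(3 - 4 x²) / (4 x) = 3 / (4 x) - x`, which decreases
from `1/4` at `x = -1` (`θ = 2π`) to `0` at `x = -√3/2` (`θ = 5π/3`). The three candidate values of
`cos (δ / 2)` are `1/2`, `0` and `-1/2`, all outside `(0, 1/4]`.
-/

theorem one_half_lt_cos_of_abs_sub_two_pi_lt {θ : ℝ} (hθ : |θ - 2 * π| < π / 3) :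
    1 / 2 < cos θ := by
  rw [← cos_sub_two_pi, ← cos_abs, ← cos_pi_div_three]
  exact cos_lt_cos_of_nonneg_of_le_pi (abs_nonneg _) (by linarith [pi_pos]) hθ

theorem one_sub_two_mul_cos_div_pos {θ : ℝ} (hhalf : cos (θ / 2) < 0) (hcos : 1 / 2 < cos θ) :
    0 < (1 - 2 * cos θ) / (4 * cos (θ / 2)) :=
  div_pos_of_neg_of_neg (by linarith) (by linarith)

theorem one_sub_two_mul_cos_div_le_one_fourth {θ : ℝ} (hhalf : cos (θ / 2) < 0) :
    (1 - 2 * cos θ) / (4 * cos (θ / 2)) ≤ 1 / 4 := by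
  have double_angle : cos θ = 2 * cos (θ / 2) ^ 2 - 1 := by
    rw [← cos_two_mul, mul_div_cancel₀ θ two_ne_zero]
  have factored : (4 * cos (θ / 2) - 3) * (cos (θ / 2) + 1) ≤ 0 :=
    mul_nonpos_of_nonpos_of_nonneg (by linarith) (by linarith [neg_one_le_cos (θ / 2)])
  rw [div_le_iff_of_neg (by linarith), double_angle]
  linarith

theorem one_sub_two_mul_cos_div_mem_Ioc {θ : ℝ} (hθ : |θ - 2 * π| < π / 3) :
    (1 - 2 * cos θ) / (4 * cos (θ / 2)) ∈ Set.Ioc 0 (1 / 4) := by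
  obtain ⟨hlower, hupper⟩ := abs_lt.mp hθ
  have hhalf : cos (θ / 2) < 0 :=
    cos_neg_of_pi_div_two_lt_of_lt (by linarith [pi_pos]) (by linarith [pi_pos])
  exact ⟨one_sub_two_mul_cos_div_pos hhalf (one_half_lt_cos_of_abs_sub_two_pi_lt hθ),
    one_sub_two_mul_cos_div_le_one_fourth hhalf⟩

theorem cos_half_notMem_Ioc {δ : ℝ} (hδ : δ = 2 * π / 3 ∨ δ = π ∨ δ = 4 * π / 3) :
    cos (δ / 2) ∉ Set.Ioc 0 (1 / 4) := by
  rcases hδ with rfl | rfl | rfl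
  · rw [show 2 * π / 3 / 2 = π / 3 by ring, cos_pi_div_three]
    norm_num
  · rw [cos_pi_div_two]
    norm_num
  · rw [show 4 * π / 3 / 2 = π - π / 3 by ring, cos_pi_sub, cos_pi_div_three]
    norm_num

theorem type_III_north_pole_excluded_general {θ δ : ℝ} (hθ : |θ - 2 * π| < π / 3)
    (hδ : cos (δ / 2) ∉ Set.Ioc 0 (1 / 4)) :
    cos (δ / 2) ≠ (1 - 2 * cos θ) / (4 * cos (θ / 2)) :=
  (ne_of_mem_of_not_mem (one_sub_two_mul_cos_div_mem_Ioc hθ) hδ).symm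

/-- For `θ ∈ (5π/3, 2π)` and `δ ∈ {2π/3, π, 4π/3}`, one has
`cos(δ/2) ≠ (1 − 2cos θ)/(4cos(θ/2))`. -/
theorem type_III_north_pole_excluded (θ δ : ℝ) (hθ : 5 * π / 3 < θ) (hθ' : θ < 2 * π)
    (hδ : δ = 2 * π / 3 ∨ δ = π ∨ δ = 4 * π / 3) :
    cos (δ / 2) ≠ (1 - 2 * cos θ) / (4 * cos (θ / 2)) :=
  type_III_north_pole_excluded_general
    (abs_lt.mpr ⟨by linarith, by linarith [pi_pos]⟩) (cos_half_notMem_Ioc hδ)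
end

section
/- Let θ be a real number with 5π/3 < θ < 2π, and let x be a real number. Then (−x + cos(π−θ/2)²) / sin(π−θ/2)² = (cos(π−θ/2)·(1 + cos(4π−2θ))) / (sin(π−θ/2)·sin(4π−2θ)) if and only if x = 1/2. -/
open Real

/-!
With `a = π - θ / 2`, so that `4 * π - 2 * θ = 4 * a`, the half-angle formula turns the right-hand
side into `cot a * cot (2 * a) = cos (2 * a) / (2 * sin a ^ 2)`. Comparing numerators over
`sin a ^ 2` leaves `-x + cos a ^ 2 = cos (2 * a) / 2 = cos a ^ 2 - 1 / 2`.
-/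

theorem one_add_cos_two_mul_div_sin_two_mul (a : ℝ) :
    (1 + cos (2 * a)) / sin (2 * a) = cot a := by
  rw [cos_two_mul, sin_two_mul, cot_eq_cos_div_sin]
  -- If `cos a = 0`, both sides vanish, the left one as `0 / 0`.
  by_cases hcos : cos a = 0
  · simp [hcos]
  · field_simp
    ring

theorem cot_mul_cot_two_mul {a : ℝ} (hcos : cos a ≠ 0) :
    cot a * cot (2 * a) = cos (2 * a) / 2 / sin a ^ 2 := by
  rw [cot_eq_cos_div_sin, cot_eq_cos_div_sin, sin_two_mul]
  field_simp

theorem neg_add_cos_sq_div_sin_sq_eq_cot_mul_cot_two_mul_iff {a x : ℝ}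
    (hsin : sin a ≠ 0) (hcos : cos a ≠ 0) :
    (-x + cos a ^ 2) / sin a ^ 2 = cot a * cot (2 * a) ↔ x = 1 / 2 := by
  rw [cot_mul_cot_two_mul hcos, div_left_inj' (pow_ne_zero 2 hsin), cos_two_mul]
  constructor <;> intro h <;> linarith

theorem sin_two_mul_ne_zero_iff {a : ℝ} : sin (2 * a) ≠ 0 ↔ sin a ≠ 0 ∧ cos a ≠ 0 := by
  simp [sin_two_mul]

theorem type_IV_star_north_pole_delta_general (θ x : ℝ) (hθ : sin (4 * π - 2 * θ) ≠ 0) :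
    (-x + cos (π - θ / 2) ^ 2) / sin (π - θ / 2) ^ 2 =
        cos (π - θ / 2) * (1 + cos (4 * π - 2 * θ)) /
          (sin (π - θ / 2) * sin (4 * π - 2 * θ)) ↔
      x = 1 / 2 := by
  have angle_eq : 4 * π - 2 * θ = 2 * (2 * (π - θ / 2)) := by ring
  rw [angle_eq] at hθ ⊢
  obtain ⟨hsin, hcos⟩ := sin_two_mul_ne_zero_iff.mp (sin_two_mul_ne_zero_iff.mp hθ).1
  rw [mul_div_mul_comm, one_add_cos_two_mul_div_sin_two_mul, ← cot_eq_cos_div_sin]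
  exact neg_add_cos_sq_div_sin_sq_eq_cot_mul_cot_two_mul_iff hsin hcos

/-- For `θ ∈ (5π/3, 2π)` and `x ∈ ℝ`:
`(−x + cos(π−θ/2)²)/sin(π−θ/2)² = cos(π−θ/2)·(1 + cos(4π−2θ))/(sin(π−θ/2)·sin(4π−2θ))`
if and only if `x = 1/2`. -/
theorem type_IV_star_north_pole_delta (θ x : ℝ) (hθ : 5 * π / 3 < θ) (hθ' : θ < 2 * π) :
    (-x + cos (π - θ / 2) ^ 2) / sin (π - θ / 2) ^ 2 =
        cos (π - θ / 2) * (1 + cos (4 * π - 2 * θ)) /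
          (sin (π - θ / 2) * sin (4 * π - 2 * θ)) ↔
      x = 1 / 2 :=
  type_IV_star_north_pole_delta_general θ x
    (sin_pos_of_pos_of_lt_pi (by linarith) (by linarith [pi_pos])).ne'
end
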